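/- Let Γ ⊂ ℝ³ be a compact set, let σ be the two-dimensional Hausdorff measure restricted to Γ, assumed finite, let κ > 0, and let g : Γ → ℂ³ be bounded and σ-measurable. Define A(x) := ∫_Γ Φ(x,y;κ) g(y) dσ(y) and ψ := κ^{−2} curl curl A on ℝ³ ∖ Γ. Then, uniformly over unit vectors x̂ ∈ S², r e^{−iκr} ψ(r x̂) converges as r → ∞ to the far-field pattern ψ_∞(x̂) = (1/4π) x̂ × ∫_Γ (g(y) × x̂) e^{−iκ x̂·y} dσ(y). -/

import Mathlib

noncomputable section
open Real MeasureTheory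
open scoped BigOperators Topology

abbrev V3 : Type := EuclideanSpace ℝ (Fin 3)

noncomputable def pd (i : Fin 3) (f : V3 → ℂ) : V3 → ℂ :=
  fun x => fderiv ℝ f x (EuclideanSpace.single i (1:ℝ))

noncomputable def pdR (i : Fin 3) (f : V3 → ℝ) : V3 → ℝ :=
  fun x => fderiv ℝ f x (EuclideanSpace.single i (1:ℝ))

noncomputable def lap (f : V3 → ℂ) : V3 → ℂ :=
  fun x => ∑ i, pd i (pd i f) x

noncomputable def div3 (u : V3 → Fin 3 → ℂ) : V3 → ℂ :=
  fun x => ∑ i, pd i (fun y => u y i) x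

noncomputable def grad3 (f : V3 → ℂ) : V3 → Fin 3 → ℂ :=
  fun x i => pd i f x

noncomputable def vlap (u : V3 → Fin 3 → ℂ) : V3 → Fin 3 → ℂ :=
  fun x j => lap (fun y => u y j) x

noncomputable def curl3 (u : V3 → Fin 3 → ℂ) : V3 → Fin 3 → ℂ :=
  fun x => ![pd 1 (fun y => u y 2) x - pd 2 (fun y => u y 1) x,
             pd 2 (fun y => u y 0) x - pd 0 (fun y => u y 2) x,
             pd 0 (fun y => u y 1) x - pd 1 (fun y => u y 0) x]

def crossC (a b : Fin 3 → ℂ) : Fin 3 → ℂ :=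
  ![a 1 * b 2 - a 2 * b 1, a 2 * b 0 - a 0 * b 2, a 0 * b 1 - a 1 * b 0]

def crossR (a b : Fin 3 → ℝ) : Fin 3 → ℝ :=
  ![a 1 * b 2 - a 2 * b 1, a 2 * b 0 - a 0 * b 2, a 0 * b 1 - a 1 * b 0]

def dotR (a b : Fin 3 → ℝ) : ℝ := ∑ i, a i * b i
def dotC (a b : Fin 3 → ℂ) : ℂ := ∑ i, a i * b i
def castC (a : Fin 3 → ℝ) : Fin 3 → ℂ := fun i => (a i : ℂ)

/-- The Navier equation `μ Δu + (λ+μ) ∇(∇·u) + ω² u = 0` on a set `U`. -/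
def NavierOn (μ lam ω : ℝ) (u : V3 → Fin 3 → ℂ) (U : Set V3) : Prop :=
  ∀ x ∈ U, ∀ j, (μ:ℂ) * vlap u x j + ((lam + μ : ℝ):ℂ) * grad3 (div3 u) x j
      + ((ω^2 : ℝ):ℂ) * u x j = 0

/-- fundamental solution of the 3D Helmholtz equation -/
noncomputable def Phi (κ : ℂ) (x y : V3) : ℂ :=
  Complex.exp (Complex.I * κ * (‖x - y‖ : ℝ)) / (4 * (π:ℂ) * (‖x - y‖ : ℝ))

noncomputable def gradPhi (κ : ℂ) (x y : V3) : Fin 3 → ℂ :=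
  fun i => pd i (fun z => Phi κ z y) x

/-!
Differentiation under the integral sign gives `∂_u ∂_v` of a scalar potential off the compact set
`Γ` as the integral of `∂_u ∂_v Φ`. Rescaled by `r e^{-iκr}` and written in the variable
`t = 1 / r`, the kernel `(∂_u ∂_v Φ)(r x - y)` extends continuously to `t = 0`, where its value is
`(iκ)² ⟪x, u⟫ ⟪x, v⟫ e^{-iκ⟪x, y⟫} / (4π)`; by compactness of the unit sphere and of `Γ` the
convergence is uniform in `x` and `y`, hence survives integration in `y`. So in the far field every
derivative `∂_u` becomes multiplication by `iκ⟪x, u⟫`, and `κ⁻² curl curl A` becomes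
`-x × (x × A_∞) = x × (A_∞ × x)`.
-/

open Set Filter
open scoped RealInnerProductSpace

section Potential

lemma mapsTo_sub_compl_zero {G : Type*} [AddGroup G] {Γ : Set G} {x : G} (hx : x ∉ Γ) :
    MapsTo (fun y => x - y) Γ {0}ᶜ :=
  fun _ hy hxy => hx (sub_eq_zero.1 hxy ▸ hy)

variable {E F : Type*} [NormedAddCommGroup E] [MeasurableSpace E]
  [NormedAddCommGroup F] [NormedSpace ℝ F] [NormedSpace ℂ F]

/-- The potential `x ↦ ∫_Γ h(y) K(x - y) dμ(y)` of the density `h` on `Γ` with convolution kernel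
`K`. The kernel takes values in a vector space so that its derivatives are kernels too. -/
def potential (μ : Measure E) (Γ : Set E) (h : E → ℂ) (K : E → F) (x : E) : F :=
  ∫ y in Γ, h y • K (x - y) ∂μ

variable [OpensMeasurableSpace E] [ProperSpace E]
  {μ : Measure E} {Γ : Set E} {h : E → ℂ} {K : E → F} {x : E}

omit [NormedSpace ℝ F] in
lemma integrableOn_smul_comp_sub (hΓ : IsCompact Γ) (hh : IntegrableOn h Γ μ)
    (hK : ContinuousOn K {0}ᶜ) (hx : x ∉ Γ) : IntegrableOn (fun y => h y • K (x - y)) Γ μ :=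
  hh.smul_continuousOn (hK.comp (by fun_prop) (mapsTo_sub_compl_zero hx)) hΓ

variable [NormedSpace ℝ E] [SMulCommClass ℝ ℂ F]

theorem hasFDerivAt_potential (hΓ : IsCompact Γ) (hh : IntegrableOn h Γ μ)
    (hK : ContDiffOn ℝ 1 K {0}ᶜ) (hx : x ∉ Γ) :
    HasFDerivAt (potential μ Γ h K) (potential μ Γ h (fderiv ℝ K) x) x := by
  have hK' : ContinuousOn (fderiv ℝ K) {0}ᶜ :=
    hK.continuousOn_fderiv_of_isOpen isOpen_compl_singleton le_rfl
  have hΓx : Γᶜ ∈ 𝓝 x := hΓ.isClosed.isOpen_compl.mem_nhds hx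
  obtain ⟨δ, hδ, hball⟩ := Metric.nhds_basis_closedBall.mem_iff.1 hΓx
  obtain ⟨B, hB⟩ := ((isCompact_closedBall x δ).prod hΓ).exists_bound_of_continuousOn
    (f := fun p : E × E => fderiv ℝ K (p.1 - p.2))
    (hK'.comp (by fun_prop) fun p hp => mapsTo_sub_compl_zero (hball hp.1) hp.2)
  refine hasFDerivAt_integral_of_dominated_of_fderiv_le
    (F := fun w y => h y • K (w - y)) (F' := fun w y => h y • fderiv ℝ K (w - y))
    (bound := fun y => ‖h y‖ * B) (Metric.closedBall_mem_nhds x hδ) ?_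
    (integrableOn_smul_comp_sub hΓ hh hK.continuousOn hx)
    (integrableOn_smul_comp_sub hΓ hh hK' hx).aestronglyMeasurable ?_ (hh.norm.mul_const B) ?_
  · filter_upwards [hΓx] with w hw
    exact (integrableOn_smul_comp_sub hΓ hh hK.continuousOn hw).aestronglyMeasurable
  · filter_upwards [ae_restrict_mem hΓ.measurableSet] with y hy w hw
    rw [norm_smul]
    exact mul_le_mul_of_nonneg_left (hB (w, y) ⟨hw, hy⟩) (norm_nonneg _)
  · filter_upwards [ae_restrict_mem hΓ.measurableSet] with y hy w hw
    have hwy : w - y ∈ ({0}ᶜ : Set E) := mapsTo_sub_compl_zero (hball hw) hy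
    have hKwy : HasFDerivAt K (fderiv ℝ K (w - y)) (w - y) :=
      ((hK.differentiableOn one_ne_zero).differentiableAt
        (isOpen_compl_singleton.mem_nhds hwy)).hasFDerivAt
    exact ((hasFDerivAt_comp_sub y).2 hKwy).const_smul (h y)

theorem hasFDerivAt_fderiv_potential (hΓ : IsCompact Γ) (hh : IntegrableOn h Γ μ)
    (hK : ContDiffOn ℝ 2 K {0}ᶜ) (hx : x ∉ Γ) :
    HasFDerivAt (fderiv ℝ (potential μ Γ h K))
      (potential μ Γ h (fderiv ℝ (fderiv ℝ K)) x) x := by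
  have hK' : ContDiffOn ℝ 1 (fderiv ℝ K) {0}ᶜ :=
    hK.fderiv_of_isOpen isOpen_compl_singleton (by norm_num)
  refine (hasFDerivAt_potential hΓ hh hK' hx).congr_of_eventuallyEq ?_
  filter_upwards [hΓ.isClosed.isOpen_compl.mem_nhds hx] with w hw
  exact (hasFDerivAt_potential hΓ hh (hK.of_le one_le_two) hw).fderiv

end Potential

section UniformIntegral

variable {ι X α F 𝕜 : Type*} [RCLike 𝕜] [NormedAddCommGroup F] [NormedSpace ℝ F] [NormedSpace 𝕜 F]
  [MeasurableSpace α] {μ : Measure α} {Γ : Set α} {S : Set X} {l : Filter ι}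

lemma tendstoUniformlyOn_setIntegral_smul (hΓ : MeasurableSet Γ) {h : α → 𝕜}
    (hh : IntegrableOn h Γ μ) {k : ι → X × α → F} {k₀ : X × α → F}
    (hk : TendstoUniformlyOn k k₀ l (S ×ˢ Γ))
    (hint : ∀ᶠ i in l, ∀ x ∈ S, IntegrableOn (fun y => h y • k i (x, y)) Γ μ)
    (hint₀ : ∀ x ∈ S, IntegrableOn (fun y => h y • k₀ (x, y)) Γ μ) :
    TendstoUniformlyOn (fun i x => ∫ y in Γ, h y • k i (x, y) ∂μ)
      (fun x => ∫ y in Γ, h y • k₀ (x, y) ∂μ) l S := by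
  rw [Metric.tendstoUniformlyOn_iff] at hk ⊢
  intro ε hε
  set I : ℝ := ∫ y in Γ, ‖h y‖ ∂μ
  have hI : 0 < I + 1 := add_pos_of_nonneg_of_pos (integral_nonneg fun _ => norm_nonneg _) one_pos
  filter_upwards [hk (ε / (I + 1)) (div_pos hε hI), hint] with i hki hi x hx
  have hbound : ∀ y ∈ Γ, ‖h y • k₀ (x, y) - h y • k i (x, y)‖ ≤ ‖h y‖ * (ε / (I + 1)) := by
    intro y hy
    rw [← smul_sub, norm_smul, ← dist_eq_norm]
    exact mul_le_mul_of_nonneg_left (hki (x, y) ⟨hx, hy⟩).le (norm_nonneg _)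
  rw [dist_eq_norm, ← integral_sub (hint₀ x hx) (hi x hx)]
  calc ‖∫ y in Γ, (h y • k₀ (x, y) - h y • k i (x, y)) ∂μ‖
      ≤ ∫ y in Γ, ‖h y‖ * (ε / (I + 1)) ∂μ :=
        norm_integral_le_of_norm_le (hh.norm.mul_const _)
          ((ae_restrict_mem hΓ).mono hbound)
    _ = I * (ε / (I + 1)) := integral_mul_const _ _
    _ < ε := by
        rw [mul_div_left_comm]
        exact mul_lt_of_lt_one_right hε ((div_lt_one hI).2 (lt_add_one I))

end UniformIntegral

section SphericalWave

lemma hasFDerivAt_norm_of_ne_zero {E : Type*} [NormedAddCommGroup E] [InnerProductSpace ℝ E]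
    {z : E} (hz : z ≠ 0) : HasFDerivAt (fun z : E => ‖z‖) (‖z‖⁻¹ • innerSL ℝ z) z := by
  have h := (hasStrictFDerivAt_norm_sq z).hasFDerivAt.sqrt (by positivity)
  simp only [Real.sqrt_sq (norm_nonneg _)] at h
  refine h.congr_fderiv ?_
  ext v
  simp only [smul_apply, coe_innerSL_apply, nsmul_eq_mul, smul_eq_mul]
  field_simp
  norm_num

lemma hasFDerivAt_comp_norm {E F : Type*} [NormedAddCommGroup E] [InnerProductSpace ℝ E]
    [NormedAddCommGroup F] [NormedSpace ℝ F] {f : ℝ → F} {f' : F} {z : E} (hz : z ≠ 0)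
    (hf : HasDerivAt f (‖z‖ • f') ‖z‖) :
    HasFDerivAt (fun z : E => f ‖z‖) ((innerSL ℝ z).smulRight f') z := by
  refine (hf.hasFDerivAt.comp z (hasFDerivAt_norm_of_ne_zero hz)).congr_fderiv ?_
  ext v
  simp [smul_smul, mul_left_comm _ ⟪z, v⟫, hz]

/-- The radial profile `s ↦ e^{iκs} / (4πs)` of the outgoing spherical wave. -/
def waveProfile (κ : ℂ) (s : ℝ) : ℂ :=
  Complex.exp (Complex.I * κ * s) / (4 * (π : ℂ) * s)

lemma hasDerivAt_waveProfile (κ : ℂ) {s : ℝ} (hs : s ≠ 0) :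
    HasDerivAt (waveProfile κ) (s • ((Complex.I * κ / s - 1 / (s : ℂ) ^ 2) * waveProfile κ s))
      s := by
  have hid : HasDerivAt (fun s : ℝ => (s : ℂ)) 1 s := Complex.ofRealCLM.hasDerivAt
  refine ((hid.const_mul (Complex.I * κ)).cexp.div (hid.const_mul (4 * (π : ℂ)))
    (by simp [hs, Real.pi_ne_zero])).congr_deriv ?_
  rw [waveProfile, Complex.real_smul]
  field_simp

lemma hasDerivAt_mul_waveProfile (κ : ℂ) {s : ℝ} (hs : s ≠ 0) :
    HasDerivAt (fun s : ℝ => (Complex.I * κ / s - 1 / (s : ℂ) ^ 2) * waveProfile κ s)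
      (s • ((-κ ^ 2 / (s : ℂ) ^ 2 - 3 * Complex.I * κ / (s : ℂ) ^ 3 + 3 / (s : ℂ) ^ 4)
        * waveProfile κ s)) s := by
  have hs' : (s : ℂ) ≠ 0 := by exact_mod_cast hs
  have hid : HasDerivAt (fun s : ℝ => (s : ℂ)) 1 s := Complex.ofRealCLM.hasDerivAt
  have hfactor : HasDerivAt (fun s : ℝ => Complex.I * κ / s - 1 / (s : ℂ) ^ 2)
      (-(Complex.I * κ) / (s : ℂ) ^ 2 + 2 / (s : ℂ) ^ 3) s := by
    refine (((hasDerivAt_const s (Complex.I * κ)).fun_div hid hs').fun_sub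
      ((hasDerivAt_const s (1 : ℂ)).fun_div (hid.fun_pow 2) (pow_ne_zero 2 hs'))).congr_deriv ?_
    field_simp
    ring
  refine (hfactor.fun_mul (hasDerivAt_waveProfile κ hs)).congr_deriv ?_
  simp only [Complex.real_smul]
  field_simp
  ring_nf
  simp only [Complex.I_sq]
  ring

variable {E : Type*} [NormedAddCommGroup E] [InnerProductSpace ℝ E]

/-- The outgoing spherical wave `z ↦ e^{iκ|z|} / (4π|z|)`, the convolution kernel behind `Phi`:
`Phi κ x y = sphericalWave κ (x - y)`. -/
def sphericalWave (κ : ℂ) (z : E) : ℂ := waveProfile κ ‖z‖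

/-- The factor by which the operator `∂_u ∂_v` multiplies the spherical wave, evaluated at `w / t`
and homogenized so that it extends continuously to `t = 0`, the direction `w` at infinity. -/
def hessianSymbol (κ : ℂ) (u v : E) (t : ℝ) (w : E) : ℂ :=
  ⟪v, u⟫ * (Complex.I * κ * t / ‖w‖ - (t : ℂ) ^ 2 / (‖w‖ : ℂ) ^ 2)
    + ⟪w, u⟫ * ⟪w, v⟫ / (‖w‖ : ℂ) ^ 2
      * (-κ ^ 2 - 3 * Complex.I * κ * t / ‖w‖ + 3 * (t : ℂ) ^ 2 / (‖w‖ : ℂ) ^ 2)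

lemma contDiffOn_sphericalWave (κ : ℂ) {n : WithTop ℕ∞} :
    ContDiffOn ℝ n (sphericalWave κ : E → ℂ) {0}ᶜ := by
  intro z hz
  have hnorm : ContDiffAt ℝ n (fun z : E => (‖z‖ : ℂ)) z :=
    Complex.ofRealCLM.contDiff.contDiffAt.comp z (contDiffAt_norm ℝ hz)
  have hz' : 4 * (π : ℂ) * ‖z‖ ≠ 0 := by simpa [Real.pi_ne_zero] using hz
  unfold sphericalWave waveProfile
  simp only [div_eq_mul_inv]
  exact ((contDiffAt_const.mul hnorm).cexp.mul
    ((contDiffAt_const.mul hnorm).inv hz')).contDiffWithinAt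

lemma contDiffOn_fderiv_sphericalWave (κ : ℂ) :
    ContDiffOn ℝ 1 (fderiv ℝ (sphericalWave κ : E → ℂ)) {0}ᶜ :=
  (contDiffOn_sphericalWave κ (n := 2)).fderiv_of_isOpen isOpen_compl_singleton (by norm_num)

lemma continuousOn_fderiv_fderiv_sphericalWave (κ : ℂ) :
    ContinuousOn (fderiv ℝ (fderiv ℝ (sphericalWave κ : E → ℂ))) {0}ᶜ :=
  (contDiffOn_fderiv_sphericalWave κ).continuousOn_fderiv_of_isOpen isOpen_compl_singleton le_rfl

lemma fderiv_sphericalWave_apply (κ : ℂ) {z : E} (hz : z ≠ 0) (u : E) :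
    fderiv ℝ (sphericalWave κ) z u
      = ⟪z, u⟫ * ((Complex.I * κ / ‖z‖ - 1 / (‖z‖ : ℂ) ^ 2) * sphericalWave κ z) := by
  have h : HasFDerivAt (sphericalWave κ) _ z :=
    hasFDerivAt_comp_norm hz (hasDerivAt_waveProfile κ (norm_ne_zero_iff.2 hz))
  simp [h.fderiv, sphericalWave]

lemma fderiv_fderiv_sphericalWave_apply (κ : ℂ) {z : E} (hz : z ≠ 0) (v u : E) :
    fderiv ℝ (fderiv ℝ (sphericalWave κ)) z v u
      = hessianSymbol κ u v 1 z * sphericalWave κ z := by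
  have hdiff : DifferentiableAt ℝ (fderiv ℝ (sphericalWave κ : E → ℂ)) z :=
    ((contDiffOn_fderiv_sphericalWave κ).differentiableOn one_ne_zero).differentiableAt
      (isOpen_compl_singleton.mem_nhds hz)
  have hfirst : (fun w => fderiv ℝ (sphericalWave κ) w u) =ᶠ[𝓝 z] fun w : E =>
      (⟪w, u⟫ : ℂ) * ((Complex.I * κ / ‖w‖ - 1 / (‖w‖ : ℂ) ^ 2) * sphericalWave κ w) := by
    filter_upwards [isOpen_compl_singleton.mem_nhds hz] with w hw
    exact fderiv_sphericalWave_apply κ hw u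
  have hinner : HasFDerivAt (fun w : E => (⟪w, u⟫ : ℂ))
      (Complex.ofRealCLM.comp (innerSL ℝ u)) z := by
    simp only [real_inner_comm u]
    exact (Complex.ofRealCLM.comp (innerSL ℝ u)).hasFDerivAt
  have hradial : HasFDerivAt
      (fun w : E => (Complex.I * κ / ‖w‖ - 1 / (‖w‖ : ℂ) ^ 2) * sphericalWave κ w) _ z :=
    hasFDerivAt_comp_norm hz (hasDerivAt_mul_waveProfile κ (norm_ne_zero_iff.2 hz))
  have hz' : (‖z‖ : ℂ) ≠ 0 := by simpa using hz
  calc fderiv ℝ (fderiv ℝ (sphericalWave κ)) z v u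
      = fderiv ℝ (fun w => fderiv ℝ (sphericalWave κ) w u) z v := by
        rw [fderiv_clm_apply hdiff (differentiableAt_const u)]
        simp
    _ = hessianSymbol κ u v 1 z * sphericalWave κ z := by
        rw [hfirst.fderiv_eq, (hinner.fun_mul hradial).fderiv]
        simp only [hessianSymbol, sphericalWave, add_apply, smul_apply,
          ContinuousLinearMap.smulRight_apply, ContinuousLinearMap.comp_apply, coe_innerSL_apply,
          Complex.ofRealCLM_apply, Complex.real_smul, smul_eq_mul, real_inner_comm u v,
          Complex.ofReal_one]
        field_simp
        ring

end SphericalWave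

section FarField

variable {E : Type*} [NormedAddCommGroup E] [InnerProductSpace ℝ E]

lemma hessianSymbol_smul (κ : ℂ) (u v : E) {c : ℝ} (hc : 0 < c) (t : ℝ) (w : E) :
    hessianSymbol κ u v (c * t) (c • w) = hessianSymbol κ u v t w := by
  have hc' : (c : ℂ) ≠ 0 := by exact_mod_cast hc.ne'
  simp only [hessianSymbol, norm_smul, Real.norm_of_nonneg hc.le, inner_smul_left,
    Complex.ofReal_mul, conj_trivial]
  field_simp

lemma hessianSymbol_zero (κ : ℂ) (u v : E) {x : E} (hx : ‖x‖ = 1) :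
    hessianSymbol κ u v 0 x = -κ ^ 2 * (⟪x, u⟫ * ⟪x, v⟫) := by
  simp only [hessianSymbol, hx, Complex.ofReal_zero, Complex.ofReal_one]
  ring

lemma mul_norm_sub_inv_smul_sub {x : E} (hx : ‖x‖ = 1) (y : E) {r : ℝ} (hr : 0 < r) :
    r * ‖x - r⁻¹ • y‖ - r = (r⁻¹ * ‖y‖ ^ 2 - 2 * ⟪x, y⟫) / (‖x - r⁻¹ • y‖ + 1) := by
  have hsq : ‖x - r⁻¹ • y‖ ^ 2 = 1 - 2 * r⁻¹ * ⟪x, y⟫ + r⁻¹ ^ 2 * ‖y‖ ^ 2 := by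
    rw [norm_sub_sq_real, hx, inner_smul_right, norm_smul, Real.norm_of_nonneg (by positivity)]
    ring
  rw [eq_div_iff (by positivity)]
  calc (r * ‖x - r⁻¹ • y‖ - r) * (‖x - r⁻¹ • y‖ + 1) = r * (‖x - r⁻¹ • y‖ ^ 2 - 1) := by ring
    _ = r⁻¹ * ‖y‖ ^ 2 - 2 * ⟪x, y⟫ := by rw [hsq]; field_simp; ring

/-- The kernel `r e^{-iκr} (∂_u ∂_v sphericalWave)(r x - y)` in the variable `t = 1 / r`. The
phase `κ (|r x - y| - r)` is rationalized, as in `mul_norm_sub_inv_smul_sub`, in order to make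
sense at `t = 0`, i.e. at infinity. -/
def rescaledHessianKernel (κ : ℂ) (u v : E) (t : ℝ) (p : E × E) : ℂ :=
  hessianSymbol κ u v t (p.1 - t • p.2)
    * (Complex.exp (Complex.I * κ *
        ((t * ‖p.2‖ ^ 2 - 2 * ⟪p.1, p.2⟫) / (‖p.1 - t • p.2‖ + 1) : ℝ))
      / (4 * (π : ℂ) * ‖p.1 - t • p.2‖))

lemma rescaledHessianKernel_inv (κ : ℂ) (u v : E) {x y : E} (hx : ‖x‖ = 1) {r : ℝ} (hr : 0 < r)
    (hxy : r • x ≠ y) :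
    rescaledHessianKernel κ u v r⁻¹ (x, y)
      = r * Complex.exp (-(Complex.I * κ * r))
        * fderiv ℝ (fderiv ℝ (sphericalWave κ)) (r • x - y) v u := by
  have hr' : (r : ℂ) ≠ 0 := by exact_mod_cast hr.ne'
  have hsub : r • x - y = r • (x - r⁻¹ • y) := by rw [smul_sub, smul_inv_smul₀ hr.ne']
  have hsymbol : hessianSymbol κ u v 1 (r • x - y) = hessianSymbol κ u v r⁻¹ (x - r⁻¹ • y) := by
    rw [hsub, ← hessianSymbol_smul κ u v hr r⁻¹, mul_inv_cancel₀ hr.ne']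
  have hexp : Complex.exp (Complex.I * κ * (r * ‖x - r⁻¹ • y‖ - r : ℝ))
      = Complex.exp (-(Complex.I * κ * r))
        * Complex.exp (Complex.I * κ * (r * ‖x - r⁻¹ • y‖ : ℝ)) := by
    rw [← Complex.exp_add]
    push_cast
    ring_nf
  rw [fderiv_fderiv_sphericalWave_apply κ (sub_ne_zero.2 hxy), hsymbol, rescaledHessianKernel,
    ← mul_norm_sub_inv_smul_sub hx y hr, hexp, sphericalWave, waveProfile, hsub, norm_smul,
    Real.norm_of_nonneg hr.le]
  push_cast
  field_simp

lemma rescaledHessianKernel_zero (κ : ℂ) (u v : E) {x : E} (hx : ‖x‖ = 1) (y : E) :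
    rescaledHessianKernel κ u v 0 (x, y)
      = -κ ^ 2 * (⟪x, u⟫ * ⟪x, v⟫)
        * (1 / (4 * (π : ℂ)) * Complex.exp (-(Complex.I * κ * ⟪x, y⟫))) := by
  simp only [rescaledHessianKernel, zero_smul, sub_zero, hessianSymbol_zero κ u v hx, hx]
  push_cast
  ring_nf

lemma continuousOn_rescaledHessianKernel (κ : ℂ) (u v : E) :
    ContinuousOn (rescaledHessianKernel κ u v).uncurry {q | q.2.1 - q.1 • q.2.2 ≠ 0} := by
  have hnorm : ∀ q ∈ {q : ℝ × E × E | q.2.1 - q.1 • q.2.2 ≠ 0},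
      (‖q.2.1 - q.1 • q.2.2‖ : ℂ) ≠ 0 := fun q hq => by simpa using hq
  have hnorm_add : ∀ q : ℝ × E × E, ‖q.2.1 - q.1 • q.2.2‖ + 1 ≠ 0 := fun q => by positivity
  unfold Function.uncurry rescaledHessianKernel hessianSymbol
  fun_prop (disch := simp_all [Real.pi_ne_zero])

lemma eventually_smul_notMem_of_isBounded {Γ : Set E} (hΓ : Bornology.IsBounded Γ) :
    ∀ᶠ r : ℝ in atTop, ∀ x ∈ Metric.sphere (0 : E) 1, r • x ∉ Γ := by
  obtain ⟨M, hM⟩ := hΓ.exists_norm_le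
  filter_upwards [eventually_gt_atTop M, eventually_gt_atTop 0] with r hr hr0 x hx hxΓ
  have hrx : ‖r • x‖ = r := by
    rw [norm_smul, mem_sphere_zero_iff_norm.1 hx, mul_one, Real.norm_of_nonneg hr0.le]
  exact (hM _ hxΓ).not_gt (hrx.symm ▸ hr)

variable [ProperSpace E] {Γ : Set E}

lemma tendstoUniformlyOn_rescaledHessianKernel (κ : ℂ) (u v : E) (hΓ : IsCompact Γ) :
    TendstoUniformlyOn (rescaledHessianKernel κ u v) (rescaledHessianKernel κ u v 0) (𝓝 0)
      (Metric.sphere 0 1 ×ˢ Γ) := by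
  obtain ⟨M, hM⟩ := hΓ.isBounded.exists_norm_le
  set s : Set ℝ := {t | |t| * M < 1}
  have hs : s ∈ 𝓝 (0 : ℝ) :=
    (isOpen_lt (by fun_prop) continuous_const).mem_nhds (by simp)
  have hmaps : s ×ˢ (Metric.sphere 0 1 ×ˢ Γ) ⊆ {q : ℝ × E × E | q.2.1 - q.1 • q.2.2 ≠ 0} := by
    rintro ⟨t, x, y⟩ ⟨ht, hx, hy⟩ hxy
    have hnorm : 1 = |t| * ‖y‖ := by
      rw [← mem_sphere_zero_iff_norm.1 hx, sub_eq_zero.1 hxy, norm_smul, Real.norm_eq_abs]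
    exact ht.not_ge (hnorm.trans_le (mul_le_mul_of_nonneg_left (hM y hy) (abs_nonneg t)))
  intro V hV
  obtain ⟨w, hw, hwV⟩ := ((isCompact_sphere (0 : E) 1).prod hΓ).mem_uniformity_of_prod
    ((continuousOn_rescaledHessianKernel κ u v).mono hmaps) (mem_of_mem_nhds hs)
    (symm_le_uniformity hV)
  rw [nhdsWithin_eq_nhds.2 hs] at hw
  filter_upwards [hw] with t ht p hp using hwV t ht p hp

lemma tendstoUniformlyOn_fderiv_fderiv_sphericalWave (κ : ℂ) (u v : E) (hΓ : IsCompact Γ) :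
    TendstoUniformlyOn
      (fun (r : ℝ) (p : E × E) => r * Complex.exp (-(Complex.I * κ * r))
        * fderiv ℝ (fderiv ℝ (sphericalWave κ)) (r • p.1 - p.2) v u)
      (fun p => -κ ^ 2 * (⟪p.1, u⟫ * ⟪p.1, v⟫)
        * (1 / (4 * (π : ℂ)) * Complex.exp (-(Complex.I * κ * ⟪p.1, p.2⟫))))
      atTop (Metric.sphere 0 1 ×ˢ Γ) := by
  have hlim : TendstoUniformlyOn (fun r : ℝ => rescaledHessianKernel κ u v r⁻¹)
      (rescaledHessianKernel κ u v 0) atTop (Metric.sphere 0 1 ×ˢ Γ) := fun V hV =>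
    tendsto_inv_atTop_zero.eventually (tendstoUniformlyOn_rescaledHessianKernel κ u v hΓ V hV)
  refine (hlim.congr ?_).congr_right ?_
  · filter_upwards [eventually_gt_atTop 0, eventually_smul_notMem_of_isBounded hΓ.isBounded]
      with r hr hrΓ p hp
    exact rescaledHessianKernel_inv κ u v (mem_sphere_zero_iff_norm.1 hp.1) hr
      fun hxy => hrΓ p.1 hp.1 (hxy ▸ hp.2)
  · intro p hp
    exact rescaledHessianKernel_zero κ u v (mem_sphere_zero_iff_norm.1 hp.1) p.2

variable [MeasurableSpace E] {μ : Measure E}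

/-- The far-field pattern of the scalar potential with kernel `sphericalWave κ` and density `h`:
the coefficient of `e^{iκr} / r` in its expansion at `r x`, for a unit vector `x`. -/
def farFieldPattern (μ : Measure E) (Γ : Set E) (κ : ℂ) (h : E → ℂ) (x : E) : ℂ :=
  1 / (4 * (π : ℂ)) * ∫ y in Γ, h y * Complex.exp (-(Complex.I * κ * ⟪x, y⟫)) ∂μ

variable [OpensMeasurableSpace E] {h : E → ℂ}

omit [ProperSpace E] in
lemma integrableOn_mul_exp_inner (hΓ : IsCompact Γ) (hh : IntegrableOn h Γ μ) (κ : ℂ) (x : E) :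
    IntegrableOn (fun y => h y * Complex.exp (-(Complex.I * κ * ⟪x, y⟫))) Γ μ :=
  hh.mul_continuousOn (by fun_prop) hΓ

lemma fderiv_fderiv_potential_sphericalWave_apply (hΓ : IsCompact Γ) (hh : IntegrableOn h Γ μ)
    (κ : ℂ) {x : E} (hx : x ∉ Γ) (v u : E) :
    fderiv ℝ (fderiv ℝ (potential μ Γ h (sphericalWave κ))) x v u
      = ∫ y in Γ, h y • fderiv ℝ (fderiv ℝ (sphericalWave κ)) (x - y) v u ∂μ := by
  have hint := integrableOn_smul_comp_sub (K := fderiv ℝ (fderiv ℝ (sphericalWave κ))) hΓ hh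
    (continuousOn_fderiv_fderiv_sphericalWave κ) hx
  rw [(hasFDerivAt_fderiv_potential hΓ hh (contDiffOn_sphericalWave κ) hx).fderiv, potential,
    ContinuousLinearMap.integral_apply hint,
    ContinuousLinearMap.integral_apply (hint.apply_continuousLinearMap v)]
  rfl

theorem tendstoUniformlyOn_fderiv_fderiv_potential (hΓ : IsCompact Γ) (hh : IntegrableOn h Γ μ)
    (κ : ℂ) (u v : E) :
    TendstoUniformlyOn
      (fun (r : ℝ) x => r * Complex.exp (-(Complex.I * κ * r))
        * fderiv ℝ (fderiv ℝ (potential μ Γ h (sphericalWave κ))) (r • x) v u)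
      (fun x => -κ ^ 2 * (⟪x, u⟫ * ⟪x, v⟫) * farFieldPattern μ Γ κ h x)
      atTop (Metric.sphere 0 1) := by
  have hoff := eventually_smul_notMem_of_isBounded hΓ.isBounded
  have hlim := tendstoUniformlyOn_setIntegral_smul hΓ.measurableSet hh
    (tendstoUniformlyOn_fderiv_fderiv_sphericalWave κ u v hΓ) ?_ ?_
  · refine (hlim.congr ?_).congr_right ?_
    · filter_upwards [hoff] with r hr x hx
      simp only [fderiv_fderiv_potential_sphericalWave_apply hΓ hh κ (hr x hx),
        smul_eq_mul, mul_left_comm (h _), integral_const_mul]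
    · intro x _
      simp only [farFieldPattern, smul_eq_mul, mul_left_comm (h _), integral_const_mul]
  · filter_upwards [hoff] with r hr x hx
    have hcont : ContinuousOn (fun y => fderiv ℝ (fderiv ℝ (sphericalWave κ)) (r • x - y)) Γ :=
      (continuousOn_fderiv_fderiv_sphericalWave κ).comp (by fun_prop)
        (mapsTo_sub_compl_zero (hr x hx))
    exact hh.smul_continuousOn (by fun_prop) hΓ
  · intro x _
    exact hh.smul_continuousOn (by fun_prop) hΓ

end FarField

section CurlCurl

lemma crossC_crossC_apply (a b : Fin 3 → ℂ) (j : Fin 3) :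
    crossC a (crossC b a) j = ∑ i, (a i * a i * b j - a i * a j * b i) := by
  fin_cases j <;> simp only [crossC, Fin.sum_univ_three, Fin.zero_eta, Fin.mk_one,
    Fin.reduceFinMk, Matrix.cons_val] <;> ring

lemma crossC_smul (c : ℂ) (a b : Fin 3 → ℂ) : crossC a (c • b) = c • crossC a b := by
  ext j
  fin_cases j <;> simp only [crossC, Pi.smul_apply, smul_eq_mul, Fin.zero_eta, Fin.mk_one,
    Fin.reduceFinMk, Matrix.cons_val] <;> ring

lemma dotR_eq_inner (x y : V3) : dotR x y = ⟪x, y⟫ := by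
  simp [dotR, PiLp.inner_apply, mul_comm]

lemma pd_sub {f g : V3 → ℂ} {x : V3} (hf : DifferentiableAt ℝ f x) (hg : DifferentiableAt ℝ g x)
    (i : Fin 3) : pd i (fun y => f y - g y) x = pd i f x - pd i g x := by
  unfold pd
  rw [fderiv_fun_sub hf hg, sub_apply]

lemma differentiableAt_pd {f : V3 → ℂ} {x : V3} (hf : DifferentiableAt ℝ (fderiv ℝ f) x)
    (i : Fin 3) : DifferentiableAt ℝ (pd i f) x :=
  hf.clm_apply (differentiableAt_const _)

lemma pd_pd_apply {f : V3 → ℂ} {x : V3} (hf : DifferentiableAt ℝ (fderiv ℝ f) x) (a b : Fin 3) :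
    pd a (pd b f) x
      = fderiv ℝ (fderiv ℝ f) x (EuclideanSpace.single a 1) (EuclideanSpace.single b 1) := by
  unfold pd
  rw [fderiv_clm_apply hf (differentiableAt_const _)]
  simp

lemma curl3_curl3_apply {u : V3 → Fin 3 → ℂ} {x : V3}
    (hu : ∀ j, DifferentiableAt ℝ (fderiv ℝ fun y => u y j) x) (j : Fin 3) :
    curl3 (curl3 u) x j
      = ∑ i, (pd i (pd j fun y => u y i) x - pd i (pd i fun y => u y j) x) := by
  have hpd : ∀ i k, DifferentiableAt ℝ (pd i fun y => u y k) x :=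
    fun i k => differentiableAt_pd (hu k) i
  fin_cases j <;> simp only [curl3, pd_sub, hpd, Fin.sum_univ_three, Fin.zero_eta, Fin.mk_one,
    Fin.reduceFinMk, Matrix.cons_val] <;> ring

variable {Γ : Set V3} {μ : Measure V3} {κ : ℂ}

lemma hasFDerivAt_fderiv_of_eqOn_potential {h f : V3 → ℂ} (hΓ : IsCompact Γ)
    (hh : IntegrableOn h Γ μ) (hf : EqOn f (potential μ Γ h (sphericalWave κ)) Γᶜ) {x : V3}
    (hx : x ∉ Γ) :
    HasFDerivAt (fderiv ℝ f) (fderiv ℝ (fderiv ℝ (potential μ Γ h (sphericalWave κ))) x) x :=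
  (hasFDerivAt_fderiv_potential hΓ hh (contDiffOn_sphericalWave κ) hx).differentiableAt.hasFDerivAt
    |>.congr_of_eventuallyEq (hf.eventuallyEq_of_mem (hΓ.isClosed.isOpen_compl.mem_nhds hx)).fderiv

lemma tendstoUniformlyOn_pd_pd_of_eqOn_potential {h f : V3 → ℂ} (hΓ : IsCompact Γ)
    (hh : IntegrableOn h Γ μ) (hf : EqOn f (potential μ Γ h (sphericalWave κ)) Γᶜ) (a b : Fin 3) :
    TendstoUniformlyOn
      (fun (r : ℝ) (x : V3) => r * Complex.exp (-(Complex.I * κ * r)) * pd a (pd b f) (r • x))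
      (fun x => -κ ^ 2 * (x a * x b) * farFieldPattern μ Γ κ h x) atTop (Metric.sphere 0 1) := by
  refine ((tendstoUniformlyOn_fderiv_fderiv_potential hΓ hh κ (EuclideanSpace.single b 1)
    (EuclideanSpace.single a 1)).congr ?_).congr_right ?_
  · filter_upwards [eventually_smul_notMem_of_isBounded hΓ.isBounded] with r hr x hx
    have hfx := hasFDerivAt_fderiv_of_eqOn_potential hΓ hh hf (hr x hx)
    simp only [pd_pd_apply hfx.differentiableAt, hfx.fderiv]
  · intro x _
    simp [EuclideanSpace.inner_single_right, mul_comm (x a : ℂ)]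

variable {g A : V3 → Fin 3 → ℂ}

lemma potential_sphericalWave_eq_integral_Phi (h : V3 → ℂ) (x : V3) :
    potential μ Γ h (sphericalWave κ) x = ∫ y in Γ, Phi κ x y * h y ∂μ := by
  simp only [potential, smul_eq_mul, mul_comm (h _)]
  rfl

theorem tendstoUniformlyOn_curl3_curl3 (hΓ : IsCompact Γ)
    (hg : ∀ j, IntegrableOn (fun y => g y j) Γ μ)
    (hA : ∀ j, EqOn (fun x => A x j) (potential μ Γ (fun y => g y j) (sphericalWave κ)) Γᶜ)
    (j : Fin 3) :
    TendstoUniformlyOn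
      (fun (r : ℝ) (x : V3) =>
        r * Complex.exp (-(Complex.I * κ * r)) * curl3 (curl3 A) (r • x) j)
      (fun x => κ ^ 2 * crossC (castC x)
        (crossC (fun k => farFieldPattern μ Γ κ (fun y => g y k) x) (castC x)) j)
      atTop (Metric.sphere 0 1) := by
  have hpd := fun a b k => tendstoUniformlyOn_pd_pd_of_eqOn_potential hΓ (hg k) (hA k) a b
  have hterm := fun i => (hpd i j i).sub (hpd i i j)
  refine ((((hterm 0).add (hterm 1)).add (hterm 2)).congr ?_).congr_right ?_
  · filter_upwards [eventually_smul_notMem_of_isBounded hΓ.isBounded] with r hr x hx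
    have hdiff := fun k =>
      (hasFDerivAt_fderiv_of_eqOn_potential hΓ (hg k) (hA k) (hr x hx)).differentiableAt
    simp only [curl3_curl3_apply hdiff, Fin.sum_univ_three, Pi.add_apply, Pi.sub_apply]
    ring
  · intro x _
    simp only [crossC_crossC_apply, castC, Fin.sum_univ_three, Pi.add_apply, Pi.sub_apply]
    ring

lemma crossC_farFieldPattern (hΓ : IsCompact Γ) (hg : ∀ j, IntegrableOn (fun y => g y j) Γ μ)
    (x : V3) :
    crossC (fun k => farFieldPattern μ Γ κ (fun y => g y k) x) (castC x)
      = (1 / (4 * (π : ℂ))) • fun k => ∫ y in Γ, crossC (g y) (castC x) k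
          * Complex.exp (-(Complex.I * κ * (dotR x y : ℝ))) ∂μ := by
  have hint := fun k (c : ℂ) => (integrableOn_mul_exp_inner hΓ (hg k) κ x).mul_const c
  have hsub : ∀ k l (c d : ℂ), ∫ y in Γ, (g y k * c - g y l * d)
        * Complex.exp (-(Complex.I * κ * (dotR x y : ℝ))) ∂μ
      = (∫ y in Γ, g y k * Complex.exp (-(Complex.I * κ * ⟪x, y⟫)) ∂μ) * c
        - (∫ y in Γ, g y l * Complex.exp (-(Complex.I * κ * ⟪x, y⟫)) ∂μ) * d := by
    intro k l c d
    simp only [dotR_eq_inner, sub_mul, mul_right_comm _ c, mul_right_comm _ d]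
    rw [integral_sub (hint k c) (hint l d), integral_mul_const, integral_mul_const]
  ext k
  fin_cases k <;> simp only [crossC, hsub, farFieldPattern, Pi.smul_apply, smul_eq_mul,
    Fin.zero_eta, Fin.mk_one, Fin.reduceFinMk, Matrix.cons_val] <;> ring

end CurlCurl

theorem vector_potential_far_field_general
    (Γ : Set V3) (hΓ : IsCompact Γ) (μ : Measure V3) (κ : ℂ) (hκ : κ ≠ 0)
    (g : V3 → Fin 3 → ℂ) (hg : ∀ j, IntegrableOn (fun y => g y j) Γ μ)
    (A : V3 → Fin 3 → ℂ)
    (hA : ∀ x, x ∉ Γ → ∀ j, A x j = ∫ y in Γ, Phi κ x y * g y j ∂μ)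
    (ψ : V3 → Fin 3 → ℂ) (hψ : ∀ x j, ψ x j = (κ ^ 2)⁻¹ * curl3 (curl3 A) x j)
    (ψinf : V3 → Fin 3 → ℂ)
    (hψinf : ∀ xh : V3, ∀ j, ψinf xh j =
      (1 / (4 * (π : ℂ))) * crossC (castC xh)
        (fun k => ∫ y in Γ, crossC (g y) (castC xh) k *
          Complex.exp (-(Complex.I * κ * (dotR xh y : ℝ))) ∂μ) j) :
    ∀ ε > 0, ∃ R : ℝ, ∀ r : ℝ, R ≤ r → ∀ xh : V3, ‖xh‖ = 1 → ∀ j,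
      ‖(r : ℂ) * Complex.exp (-(Complex.I * κ * r)) * ψ (r • xh) j - ψinf xh j‖ < ε := by
  have hpot : ∀ j, EqOn (fun x => A x j)
      (potential μ Γ (fun y => g y j) (sphericalWave κ)) Γᶜ := fun j x hx =>
    (hA x hx j).trans (potential_sphericalWave_eq_integral_Phi _ x).symm
  have hlim : ∀ j, TendstoUniformlyOn
      (fun (r : ℝ) x => r * Complex.exp (-(Complex.I * κ * r)) * ψ (r • x) j)
      (fun x => ψinf x j) atTop (Metric.sphere 0 1) := fun j => by
    refine (((uniformContinuous_const_smul (κ ^ 2)⁻¹).comp_tendstoUniformlyOn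
      (tendstoUniformlyOn_curl3_curl3 hΓ hg hpot j)).congr ?_).congr_right ?_
    · refine .of_forall fun r x _ => ?_
      simp only [Function.comp_apply, smul_eq_mul, hψ]
      ring
    · intro x _
      simp only [Function.comp_apply, hψinf, crossC_farFieldPattern hΓ hg, crossC_smul,
        Pi.smul_apply, smul_eq_mul]
      field_simp
  intro ε hε
  obtain ⟨R, hR⟩ := eventually_atTop.1 <| eventually_all.2 fun j =>
    Metric.tendstoUniformlyOn_iff.1 (hlim j) ε hε
  refine ⟨R, fun r hr x hx j => ?_⟩
  rw [← dist_eq_norm, dist_comm]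
  exact hR r hr j x (mem_sphere_zero_iff_norm.2 hx)

/-- far-field pattern of the vector potential `ψ = κ⁻² curl curl A`,
uniformly over directions on the unit sphere. -/
theorem vector_potential_far_field
    (Γ : Set V3) (hΓ : IsCompact Γ)
    (σ : Measure V3) (hσ : σ = (μH[2] : Measure V3).restrict Γ)
    (hfin : σ Set.univ < ⊤)
    (κ : ℝ) (hκ : 0 < κ)
    (g : V3 → Fin 3 → ℂ) (hmeas : Measurable g)
    (C : ℝ) (hbd : ∀ y ∈ Γ, ∀ j, ‖g y j‖ ≤ C)
    (A : V3 → Fin 3 → ℂ) (hA : ∀ x, x ∉ Γ → ∀ j, A x j = ∫ y, Phi (κ : ℂ) x y * g y j ∂σ)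
    (ψ : V3 → Fin 3 → ℂ) (hψ : ∀ x j, ψ x j = ((κ : ℂ)^2)⁻¹ * curl3 (curl3 A) x j)
    (ψinf : V3 → Fin 3 → ℂ)
    (hψinf : ∀ xh : V3, ∀ j, ψinf xh j =
      (1 / (4 * (π : ℂ))) * crossC (castC xh)
        (fun k => ∫ y, crossC (g y) (castC xh) k * Complex.exp (-(Complex.I * κ * (dotR xh y : ℝ))) ∂σ) j) :
    ∀ ε > 0, ∃ R : ℝ, ∀ r : ℝ, R ≤ r → ∀ xh : V3, ‖xh‖ = 1 → ∀ j,
      ‖(r : ℂ) * Complex.exp (-(Complex.I * κ * (r : ℝ))) * ψ (r • xh) j - ψinf xh j‖ < ε := by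
  subst hσ
  have hg : ∀ j, IntegrableOn (fun y => g y j) Γ μH[2] := fun j =>
    Measure.integrableOn_of_bounded (by simpa using hfin.ne)
      ((measurable_pi_apply j).comp hmeas).aestronglyMeasurable
      ((ae_restrict_mem hΓ.measurableSet).mono fun y hy => hbd y hy j)
  exact vector_potential_far_field_general Γ hΓ μH[2] κ (by exact_mod_cast hκ.ne') g hg A hA ψ hψ
    ψinf hψinf
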